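/- Let H be a real Hilbert space, Ψ : H → ℝ ∪ {+∞} proper, lower-semicontinuous and convex, and Φ : H → ℝ convex and continuously differentiable with L-Lipschitz continuous gradient. Suppose x* ∈ argmin(Ψ + Φ), and let (x_k) be generated by the accelerated forward-backward algorithm with parameter α ≥ 3 and step size 0 < s < 1/L. With z_k = x_k + ((k−1)/(α−1))(x_k − x_{k−1}) and E(k) = (2s/(α−1))(k+α−2)²(Θ(x_k) − Θ(x*)) + (α−1)‖z_k − x*‖², one has, for every k ≥ 0, E(k+1) + 2s((α−3)/(α−1)) k (Θ(x_k) − Θ(x*)) ≤ E(k). -/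

import Mathlib

open Filter RealInnerProductSpace

/-!
Write `t = k + α - 1` and let `w = (k / t) x_k + ((α - 1) / t) x*`. The parameters of the algorithm
are such that `x_{k+1} - w` and `y_k - w` are `(α - 1) / t` times `z_{k+1} - x*` and `z_k - x*`.
The forward-backward inequality
`Θ(x_{k+1}) + ‖x_{k+1} - w‖² / (2s) ≤ Θ(w) + ‖y_k - w‖² / (2s)`,
with `Θ(w)` bounded by convexity, therefore already compares the two energies; what is left over is
`(k + α - 2)² = t k + (α - 3) k + (α - 2)²` together with `Θ(x_k) ≥ Θ(x*)`.
-/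

open Set
open scoped NNReal Topology

section NormedSpace

variable {E : Type*} [NormedAddCommGroup E] [NormedSpace ℝ E] {D : Set E} {f : E → ℝ}

lemma add_modulus_le_of_isMinOn {φ : ℝ → ℝ} {p u : E} (hf : UniformConvexOn D φ f)
    (hmin : IsMinOn f D p) (hp : p ∈ D) (hu : u ∈ D) : f p + φ ‖p - u‖ ≤ f u := by
  have h_segment : ∀ b ∈ Ioo (0 : ℝ) 1, f p + (1 - b) * φ ‖p - u‖ ≤ f u := by
    rintro b ⟨hb₀, hb₁⟩
    have hb : 0 ≤ 1 - b := by linarith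
    have h_le : f p ≤ (1 - b) * f p + b * f u - (1 - b) * b * φ ‖p - u‖ :=
      (hmin (hf.1 hp hu hb hb₀.le (by ring))).trans (hf.2 hp hu hb hb₀.le (by ring))
    refine le_of_mul_le_mul_left ?_ hb₀
    linarith
  have h_lim : Tendsto (fun b : ℝ ↦ f p + (1 - b) * φ ‖p - u‖) (𝓝[>] 0)
      (𝓝 (f p + φ ‖p - u‖)) := by
    refine tendsto_nhdsWithin_of_tendsto_nhds (Continuous.tendsto' (by fun_prop) _ _ ?_)
    ring
  exact le_of_tendsto h_lim (eventually_of_mem (Ioo_mem_nhdsGT one_pos) h_segment)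

lemma add_fderivWithin_le_of_convexOn {f' : E →L[ℝ] ℝ} {x y : E} (hf : ConvexOn ℝ D f)
    (hf' : HasFDerivWithinAt f f' D x) (hx : x ∈ D) (hy : y ∈ D) : f x + f' (y - x) ≤ f y := by
  have h_deriv : HasDerivWithinAt (f ∘ AffineMap.lineMap x y) (f' (y - x))
      (AffineMap.lineMap x y ⁻¹' D) (0 : ℝ) :=
    hf'.comp_hasDerivWithinAt_of_eq 0 AffineMap.hasDerivWithinAt_lineMap (mapsTo_preimage _ _)
      (AffineMap.lineMap_apply_zero x y).symm
  have h_slope := (hf.comp_affineMap (AffineMap.lineMap x y)).le_slope_of_hasDerivWithinAt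
    (by simpa using hx) (by simpa using hy) one_pos h_deriv
  simp only [slope_def_field, Function.comp_apply, AffineMap.lineMap_apply_zero,
    AffineMap.lineMap_apply_one, sub_zero, div_one] at h_slope
  linarith

lemma le_add_of_lipschitzOnWith_fderivWithin {f' : E → E →L[ℝ] ℝ} {K : ℝ≥0} {x y : E}
    (hD : Convex ℝ D) (hf : ∀ u ∈ D, HasFDerivWithinAt f (f' u) D u)
    (hf' : LipschitzOnWith K f' D) (hx : x ∈ D) (hy : y ∈ D) :
    f y ≤ f x + f' x (y - x) + K / 2 * ‖y - x‖ ^ 2 := by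
  let γ : ℝ → E := AffineMap.lineMap x y
  have hγ : MapsTo γ (Icc 0 1) D := fun t ht ↦ hD.lineMap_mem hx hy ht
  have h_deriv : ∀ t ∈ Icc (0 : ℝ) 1,
      HasDerivWithinAt (f ∘ γ) (f' (γ t) (y - x)) (Icc 0 1) t := fun t ht ↦
    (hf _ (hγ ht)).comp_hasDerivWithinAt t AffineMap.hasDerivWithinAt_lineMap hγ
  let B : ℝ → ℝ := fun t ↦ f x + t * f' x (y - x) + t ^ 2 * (K / 2 * ‖y - x‖ ^ 2)
  have hB : ∀ t, HasDerivAt B (f' x (y - x) + t * (K * ‖y - x‖ ^ 2)) t := fun t ↦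
    ((((hasDerivAt_id t).mul_const _).const_add _).add
      ((hasDerivAt_pow 2 t).mul_const _)).congr_deriv (by
        simp only [map_sub, one_mul, Nat.cast_ofNat, Nat.add_one_sub_one, pow_one]
        ring)
  have h_deriv_le : ∀ t ∈ Ico (0 : ℝ) 1,
      f' (γ t) (y - x) ≤ f' x (y - x) + t * (K * ‖y - x‖ ^ 2) := by
    intro t ht
    have h_dist : ‖γ t - x‖ = t * ‖y - x‖ := by
      rw [← dist_eq_norm, dist_lineMap_left, Real.norm_of_nonneg ht.1, dist_eq_norm, norm_sub_rev]
    calc f' (γ t) (y - x) = f' x (y - x) + (f' (γ t) - f' x) (y - x) := by simp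
      _ ≤ f' x (y - x) + ‖f' (γ t) - f' x‖ * ‖y - x‖ := by
        gcongr
        exact (le_abs_self _).trans ((f' (γ t) - f' x).le_opNorm _)
      _ ≤ f' x (y - x) + K * ‖γ t - x‖ * ‖y - x‖ := by
        gcongr
        exact hf'.norm_sub_le (hγ (Ico_subset_Icc_self ht)) hx
      _ = f' x (y - x) + t * (K * ‖y - x‖ ^ 2) := by rw [h_dist]; ring
  have h_le : (f ∘ γ) 1 ≤ B 1 := image_le_of_deriv_right_le_deriv_boundary
    (fun t ht ↦ (h_deriv t ht).continuousWithinAt)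
    (fun t ht ↦ (h_deriv t (Ico_subset_Icc_self ht)).mono_of_mem_nhdsWithin
      (Icc_mem_nhdsGE_of_mem ht))
    (by simp [γ, B]) (fun t _ ↦ (hB t).continuousAt.continuousWithinAt)
    (fun t _ ↦ (hB t).hasDerivWithinAt) h_deriv_le (right_mem_Icc.2 zero_le_one)
  simpa [γ, B] using h_le

end NormedSpace

section ForwardBackward

variable {H : Type*} [NormedAddCommGroup H] [InnerProductSpace ℝ H] {D : Set H} {f : H → ℝ} {s : ℝ}

lemma strongConvexOn_const_mul_norm_sub_sq (hD : Convex ℝ D) (m : ℝ) (v : H) :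
    StrongConvexOn D m fun u ↦ m / 2 * ‖u - v‖ ^ 2 := by
  have h_affine : (fun u : H ↦ m / 2 * ‖u - v‖ ^ 2 - m / 2 * ‖u‖ ^ 2) =
      fun u ↦ (-m • innerSL ℝ v) u + m / 2 * ‖v‖ ^ 2 := by
    ext u
    simp only [norm_sub_sq_real, real_inner_comm v u, smul_apply, coe_innerSL_apply, smul_eq_mul]
    ring
  rw [strongConvexOn_iff_convex, h_affine]
  exact ((-m • innerSL ℝ v).toLinearMap.convexOn hD).add_const _

lemma prox_three_point {p u v : H} (hf : ConvexOn ℝ D f)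
    (hmin : IsMinOn (fun w ↦ f w + 1 / (2 * s) * ‖w - v‖ ^ 2) D p) (hp : p ∈ D) (hu : u ∈ D) :
    f p + 1 / (2 * s) * ‖p - v‖ ^ 2 + 1 / (2 * s) * ‖p - u‖ ^ 2
      ≤ f u + 1 / (2 * s) * ‖u - v‖ ^ 2 := by
  have h_half : 1 / (2 * s) = s⁻¹ / 2 := by ring
  rw [h_half] at hmin ⊢
  have h_sum := (uniformConvexOn_zero.2 hf).add (strongConvexOn_const_mul_norm_sub_sq hf.1 s⁻¹ v)
  rw [zero_add] at h_sum
  exact add_modulus_le_of_isMinOn h_sum hmin hp hu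

lemma forward_backward_inequality {Φ : H → ℝ} {Φ' : H → H} {K : ℝ≥0} {p u y : H}
    (hf : ConvexOn ℝ D f) (hΦ : ConvexOn ℝ univ Φ)
    (hΦ' : ∀ w, HasFDerivAt Φ (InnerProductSpace.toDualMap ℝ H (Φ' w)) w)
    (hlip : LipschitzWith K Φ') (hs : 0 < s) (hsK : s * K ≤ 1)
    (hmin : IsMinOn (fun w ↦ f w + 1 / (2 * s) * ‖w - (y - s • Φ' y)‖ ^ 2) D p)
    (hp : p ∈ D) (hu : u ∈ D) :
    f p + Φ p + 1 / (2 * s) * ‖p - u‖ ^ 2 ≤ f u + Φ u + 1 / (2 * s) * ‖y - u‖ ^ 2 := by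
  have h_prox := prox_three_point hf hmin hp hu
  have h_lower : Φ y + ⟪Φ' y, u - y⟫ ≤ Φ u :=
    add_fderivWithin_le_of_convexOn hΦ (hΦ' y).hasFDerivWithinAt (mem_univ y) (mem_univ u)
  have hlip_dual : LipschitzWith K fun w ↦ InnerProductSpace.toDualMap ℝ H (Φ' w) := by
    simpa only [one_mul] using! (InnerProductSpace.toDualMap ℝ H).lipschitz.comp hlip
  have h_upper : Φ p ≤ Φ y + ⟪Φ' y, p - y⟫ + K / 2 * ‖p - y‖ ^ 2 :=
    le_add_of_lipschitzOnWith_fderivWithin convex_univ (fun w _ ↦ (hΦ' w).hasFDerivWithinAt)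
      hlip_dual.lipschitzOnWith (mem_univ y) (mem_univ p)
  have h_curvature : (K : ℝ) / 2 ≤ 1 / (2 * s) := by
    rw [div_le_div_iff₀ two_pos (by positivity)]
    linarith
  have h_quadratic : K / 2 * ‖p - y‖ ^ 2 ≤ 1 / (2 * s) * ‖p - y‖ ^ 2 := by gcongr
  have h_expand : ∀ w, 1 / (2 * s) * ‖w - (y - s • Φ' y)‖ ^ 2 =
      1 / (2 * s) * ‖w - y‖ ^ 2 + ⟪Φ' y, w - y⟫ + s / 2 * ‖Φ' y‖ ^ 2 := by
    intro w
    rw [sub_sub_eq_add_sub, add_sub_right_comm, norm_add_sq_real, inner_smul_right, norm_smul,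
      Real.norm_of_nonneg hs.le, real_inner_comm]
    field_simp
  rw [h_expand, h_expand] at h_prox
  rw [norm_sub_rev y u]
  linarith

end ForwardBackward

section ExtendedReal

variable {H : Type*} {Ψ : H → EReal}

lemma ne_top_of_isMinOn_add_coe {g : H → ℝ} {p : H} (hΨ : ∃ u, Ψ u ≠ ⊤)
    (hp : IsMinOn (fun u ↦ Ψ u + (g u : EReal)) univ p) : Ψ p ≠ ⊤ := by
  obtain ⟨u, hu⟩ := hΨ
  intro h_top
  have h_le := isMinOn_univ_iff.1 hp u
  rw [h_top, EReal.top_add_coe, top_le_iff] at h_le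
  exact EReal.add_ne_top hu (EReal.coe_ne_top _) h_le

lemma add_coe_eq_coe_toReal_add {a : EReal} (h_top : a ≠ ⊤) (h_bot : a ≠ ⊥) (r : ℝ) :
    a + (r : EReal) = ((a.toReal + r : ℝ) : EReal) := by
  rw [EReal.coe_add, EReal.coe_toReal h_top h_bot]

lemma isMinOn_toReal_add {g : H → ℝ} {p : H} (hΨ_ne_bot : ∀ u, Ψ u ≠ ⊥)
    (hΨ_proper : ∃ u, Ψ u ≠ ⊤) (hp : IsMinOn (fun u ↦ Ψ u + (g u : EReal)) univ p) :
    IsMinOn (fun u ↦ (Ψ u).toReal + g u) {u | Ψ u ≠ ⊤} p := by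
  intro u hu
  have h_le := isMinOn_univ_iff.1 hp u
  rwa [add_coe_eq_coe_toReal_add hu (hΨ_ne_bot u), add_coe_eq_coe_toReal_add
    (ne_top_of_isMinOn_add_coe hΨ_proper hp) (hΨ_ne_bot p), EReal.coe_le_coe_iff] at h_le

lemma convexOn_toReal [AddCommMonoid H] [SMul ℝ H] (hΨ_ne_bot : ∀ u, Ψ u ≠ ⊥)
    (hΨ_convex : ∀ u v : H, ∀ a b : ℝ, 0 ≤ a → 0 ≤ b → a + b = 1 →
      Ψ (a • u + b • v) ≤ (a : EReal) * Ψ u + (b : EReal) * Ψ v) :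
    ConvexOn ℝ {u | Ψ u ≠ ⊤} fun u ↦ (Ψ u).toReal := by
  have h_le : ∀ u, Ψ u ≠ ⊤ → ∀ v, Ψ v ≠ ⊤ → ∀ a b : ℝ, 0 ≤ a → 0 ≤ b → a + b = 1 →
      Ψ (a • u + b • v) ≤ ((a * (Ψ u).toReal + b * (Ψ v).toReal : ℝ) : EReal) := by
    intro u hu v hv a b ha hb hab
    simpa only [EReal.coe_add, EReal.coe_mul, EReal.coe_toReal hu (hΨ_ne_bot u),
      EReal.coe_toReal hv (hΨ_ne_bot v)] using hΨ_convex u v a b ha hb hab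
  refine ⟨fun u hu v hv a b ha hb hab ↦ ?_, fun u hu v hv a b ha hb hab ↦ ?_⟩
  · exact ne_top_of_le_ne_top (EReal.coe_ne_top _) (h_le u hu v hv a b ha hb hab)
  · exact EReal.toReal_le_toReal (h_le u hu v hv a b ha hb hab) (hΨ_ne_bot _) (EReal.coe_ne_top _)

end ExtendedReal

section FISTA

variable {H : Type*} [NormedAddCommGroup H] [NormedSpace ℝ H] {s α : ℝ} {x y : ℕ → H} {xstar : H}

/-- The auxiliary sequence `z_k` of the energy. The truncated subtraction in `x (k - 1)` makes
`x_{-1} = x_0`, so that `z_0 = x_0`. -/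
noncomputable def fistaAnchor (α : ℝ) (x : ℕ → H) (k : ℕ) : H :=
  x k + (((k : ℝ) - 1) / (α - 1)) • (x k - x (k - 1))

/-- The energy `E(k)` of the accelerated forward-backward algorithm. It takes values in `EReal`
because `Θ (x 0)` may be infinite. -/
noncomputable def fistaEnergy (Θ : H → EReal) (s α : ℝ) (x : ℕ → H) (xstar : H) (k : ℕ) : EReal :=
  ((2 * s / (α - 1) * ((k : ℝ) + α - 2) ^ 2 : ℝ) : EReal) * (Θ (x k) - Θ xstar) +
    (((α - 1) * ‖fistaAnchor α x k - xstar‖ ^ 2 : ℝ) : EReal)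

lemma fistaEnergy_of_eq_coe {Θ : H → EReal} {k : ℕ} {a b : ℝ} (ha : Θ (x k) = a)
    (hb : Θ xstar = b) :
    fistaEnergy Θ s α x xstar k = ((2 * s / (α - 1) * ((k : ℝ) + α - 2) ^ 2 * (a - b) +
      (α - 1) * ‖fistaAnchor α x k - xstar‖ ^ 2 : ℝ) : EReal) := by
  rw [fistaEnergy, ha, hb]
  norm_cast

lemma le_fistaEnergy {Θ : H → EReal} {k : ℕ} (hs : 0 < s) (hα : 1 < α)
    (hΘ : 0 ≤ Θ (x k) - Θ xstar) :
    (((α - 1) * ‖fistaAnchor α x k - xstar‖ ^ 2 : ℝ) : EReal) ≤ fistaEnergy Θ s α x xstar k := by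
  have : 0 < α - 1 := sub_pos.2 hα
  exact le_add_of_nonneg_left (EReal.mul_nonneg (EReal.coe_nonneg.2 (by positivity)) hΘ)

lemma natCast_add_sub_one_pos (hα : 1 < α) (k : ℕ) : 0 < (k : ℝ) + α - 1 := by
  linarith [k.cast_nonneg (α := ℝ)]

/-- The convex combination of `x_k` and `x*` at which the forward-backward inequality is applied.
For `k = 0` it is `x*`, whether or not `x_0` has finite objective value. -/
noncomputable def fistaTarget (α : ℝ) (x : ℕ → H) (xstar : H) (k : ℕ) : H :=
  ((k : ℝ) / (k + α - 1)) • x k + ((α - 1) / (k + α - 1)) • xstar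

lemma succ_sub_fistaTarget (hα : 1 < α) (k : ℕ) :
    x (k + 1) - fistaTarget α x xstar k =
      ((α - 1) / (k + α - 1)) • (fistaAnchor α x (k + 1) - xstar) := by
  have hβ : α - 1 ≠ 0 := (sub_pos.2 hα).ne'
  have ht := (natCast_add_sub_one_pos hα k).ne'
  simp only [fistaTarget, fistaAnchor, Nat.add_sub_cancel, Nat.cast_add_one]
  match_scalars <;> field_simp [hβ, ht] <;> ring

lemma extrapolation_sub_fistaTarget {k : ℕ} (hα : 1 < α)
    (hy : y k = x k + (((k : ℝ) - 1) / ((k : ℝ) + α - 1)) • (x k - x (k - 1))) :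
    y k - fistaTarget α x xstar k =
      ((α - 1) / (k + α - 1)) • (fistaAnchor α x k - xstar) := by
  have hβ : α - 1 ≠ 0 := (sub_pos.2 hα).ne'
  have ht := (natCast_add_sub_one_pos hα k).ne'
  rw [hy, fistaTarget, fistaAnchor]
  match_scalars <;> field_simp [hβ, ht]
  ring

lemma fistaTarget_mem_and_map_le {D : Set H} {F : H → ℝ} {k : ℕ} (hF : ConvexOn ℝ D F)
    (hα : 1 < α) (hxk : k ≠ 0 → x k ∈ D) (hxstar : xstar ∈ D) :
    fistaTarget α x xstar k ∈ D ∧ F (fistaTarget α x xstar k) ≤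
      k / (k + α - 1) * F (x k) + (α - 1) / (k + α - 1) * F xstar := by
  have hβ := sub_pos.2 hα
  have ht := natCast_add_sub_one_pos hα k
  rcases eq_or_ne k 0 with rfl | hk
  · have h_target : fistaTarget α x xstar 0 = xstar := by
      simp [fistaTarget, div_self hβ.ne']
    simp [h_target, hxstar, div_self hβ.ne']
  · have hw₁ : 0 ≤ (k : ℝ) / (k + α - 1) := by positivity
    have hw₂ : 0 ≤ (α - 1) / (k + α - 1) := by positivity
    have hw : (k : ℝ) / (k + α - 1) + (α - 1) / (k + α - 1) = 1 := by
      rw [← add_div, ← add_sub_assoc, div_self ht.ne']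
    exact ⟨hF.1 (hxk hk) hxstar hw₁ hw₂ hw, hF.2 (hxk hk) hxstar hw₁ hw₂ hw⟩

lemma fista_step_inequality {D : Set H} {F : H → ℝ} {k : ℕ} (hF : ConvexOn ℝ D F)
    (hs : 0 < s) (hα : 1 < α)
    (hy : y k = x k + (((k : ℝ) - 1) / ((k : ℝ) + α - 1)) • (x k - x (k - 1)))
    (hfb : ∀ u ∈ D, F (x (k + 1)) + 1 / (2 * s) * ‖x (k + 1) - u‖ ^ 2
      ≤ F u + 1 / (2 * s) * ‖y k - u‖ ^ 2)
    (hxk : k ≠ 0 → x k ∈ D) (hxstar : xstar ∈ D) :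
    2 * s / (α - 1) * (k + α - 1) ^ 2 * (F (x (k + 1)) - F xstar) +
        (α - 1) * ‖fistaAnchor α x (k + 1) - xstar‖ ^ 2
      ≤ 2 * s / (α - 1) * ((k + α - 1) * k) * (F (x k) - F xstar) +
        (α - 1) * ‖fistaAnchor α x k - xstar‖ ^ 2 := by
  have hβ := sub_pos.2 hα
  have ht := natCast_add_sub_one_pos hα k
  obtain ⟨h_mem, h_convex⟩ := fistaTarget_mem_and_map_le hF hα hxk hxstar
  have h_le := (hfb _ h_mem).trans (add_le_add_left h_convex _)
  rw [succ_sub_fistaTarget hα, extrapolation_sub_fistaTarget hα hy, norm_smul, norm_smul,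
    Real.norm_of_nonneg (div_pos hβ ht).le, mul_pow, mul_pow] at h_le
  set t := (k : ℝ) + α - 1 with ht_def
  have h_scaled := mul_le_mul_of_nonneg_left h_le
    (by positivity : 0 ≤ 2 * s / (α - 1) * t ^ 2)
  have h_weight : (k : ℝ) = t - (α - 1) := by rw [ht_def]; ring
  rw [h_weight] at h_scaled ⊢
  field_simp at h_scaled ⊢
  linarith

lemma fista_coeff_mul_le {b : ℝ} (hs : 0 < s) (hα : 1 < α) (hb : 0 ≤ b) (r : ℝ) :
    2 * s / (α - 1) * ((r + α - 1) * r) * b + 2 * s * ((α - 3) / (α - 1)) * r * b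
      ≤ 2 * s / (α - 1) * (r + α - 2) ^ 2 * b := by
  have : 0 < α - 1 := sub_pos.2 hα
  have h_slack : 0 ≤ 2 * s / (α - 1) * (α - 2) ^ 2 * b := by positivity
  linear_combination h_slack

lemma fistaEnergy_succ_add_le {Θ : H → EReal} {D : Set H} {F : H → ℝ} (hF : ConvexOn ℝ D F)
    (hΘ : ∀ u ∈ D, Θ u = F u) (hs : 0 < s) (hα : 1 < α)
    (hy : ∀ k : ℕ, y k = x k + (((k : ℝ) - 1) / ((k : ℝ) + α - 1)) • (x k - x (k - 1)))
    (hx : ∀ k, x (k + 1) ∈ D)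
    (hfb : ∀ k, ∀ u ∈ D, F (x (k + 1)) + 1 / (2 * s) * ‖x (k + 1) - u‖ ^ 2
      ≤ F u + 1 / (2 * s) * ‖y k - u‖ ^ 2)
    (hxstar : xstar ∈ D) (hmin : IsMinOn Θ univ xstar) (k : ℕ) :
    fistaEnergy Θ s α x xstar (k + 1) +
        ((2 * s * ((α - 3) / (α - 1)) * (k : ℝ) : ℝ) : EReal) * (Θ (x k) - Θ xstar)
      ≤ fistaEnergy Θ s α x xstar k := by
  have hΘ_star := hΘ xstar hxstar
  have h_gap : 0 ≤ Θ (x k) - Θ xstar := by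
    rw [EReal.sub_nonneg (by simp [hΘ_star]) (by simp [hΘ_star])]
    exact hmin (mem_univ _)
  have hxk : k ≠ 0 → x k ∈ D := fun hk ↦ Nat.succ_pred_eq_of_ne_zero hk ▸ hx (k - 1)
  have h_step := fista_step_inequality hF hs hα (hy k) (hfb k) hxk hxstar
  have h_cast : ((k + 1 : ℕ) : ℝ) + α - 2 = k + α - 1 := by push_cast; ring
  rw [fistaEnergy_of_eq_coe (hΘ _ (hx k)) hΘ_star, h_cast]
  rcases eq_or_ne k 0 with rfl | hk
  · simp only [Nat.cast_zero, mul_zero, zero_mul, EReal.coe_zero, zero_add, add_zero] at h_step ⊢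
    exact (EReal.coe_le_coe_iff.2 h_step).trans (le_fistaEnergy hs hα h_gap)
  · have hΘ_k := hΘ _ (hxk hk)
    rw [fistaEnergy_of_eq_coe hΘ_k hΘ_star]
    rw [hΘ_k, hΘ_star] at h_gap ⊢
    norm_cast at h_gap ⊢
    linarith [fista_coeff_mul_le hs hα h_gap k]

end FISTA

theorem fista_energy_inequality_general
    {H : Type*} [NormedAddCommGroup H] [InnerProductSpace ℝ H]
    {Ψ : H → EReal} {Φ : H → ℝ} {Φ' : H → H} {K : ℝ≥0} {s α : ℝ} {x y : ℕ → H} {xstar : H}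
    (hΨ_ne_bot : ∀ u, Ψ u ≠ ⊥) (hΨ_proper : ∃ u, Ψ u ≠ ⊤)
    (hΨ_convex : ∀ u v : H, ∀ a b : ℝ, 0 ≤ a → 0 ≤ b → a + b = 1 →
      Ψ (a • u + b • v) ≤ (a : EReal) * Ψ u + (b : EReal) * Ψ v)
    (hΦ_convex : ConvexOn ℝ univ Φ)
    (hΦ_diff : ∀ u, HasFDerivAt Φ (InnerProductSpace.toDualMap ℝ H (Φ' u)) u)
    (hΦ_lip : LipschitzWith K Φ') (hα : 1 < α) (hs : 0 < s) (hsK : s * K ≤ 1)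
    (hy : ∀ k : ℕ, y k = x k + (((k : ℝ) - 1) / ((k : ℝ) + α - 1)) • (x k - x (k - 1)))
    (hx : ∀ k : ℕ, IsMinOn
      (fun u ↦ Ψ u + ((1 / (2 * s) * ‖u - (y k - s • Φ' (y k))‖ ^ 2 : ℝ) : EReal)) univ (x (k + 1)))
    (hxstar : IsMinOn (fun u ↦ Ψ u + (Φ u : EReal)) univ xstar) (k : ℕ) :
    fistaEnergy (fun u ↦ Ψ u + (Φ u : EReal)) s α x xstar (k + 1) +
        ((2 * s * ((α - 3) / (α - 1)) * (k : ℝ) : ℝ) : EReal) *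
          ((Ψ (x k) + (Φ (x k) : EReal)) - (Ψ xstar + (Φ xstar : EReal)))
      ≤ fistaEnergy (fun u ↦ Ψ u + (Φ u : EReal)) s α x xstar k := by
  have hf := convexOn_toReal hΨ_ne_bot hΨ_convex
  have hx_dom : ∀ k, Ψ (x (k + 1)) ≠ ⊤ := fun k ↦ ne_top_of_isMinOn_add_coe hΨ_proper (hx k)
  exact fistaEnergy_succ_add_le (hf.add (hΦ_convex.subset (subset_univ _) hf.1))
    (fun u hu ↦ add_coe_eq_coe_toReal_add hu (hΨ_ne_bot u) (Φ u)) hs hα hy hx_dom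
    (fun k u hu ↦ forward_backward_inequality hf hΦ_convex hΦ_diff hΦ_lip hs hsK
      (isMinOn_toReal_add hΨ_ne_bot hΨ_proper (hx k)) (hx_dom k) hu)
    (ne_top_of_isMinOn_add_coe hΨ_proper hxstar) hxstar k

/-- Energy inequality (10): `E(k+1) + 2s((α-3)/(α-1)) k (Θ(x_k) - Θ(x*)) ≤ E(k)` for all `k ≥ 0`. -/
theorem fista_energy_inequality
    {H : Type*} [NormedAddCommGroup H] [InnerProductSpace ℝ H] [CompleteSpace H]
    (Ψ : H → EReal) (Φ : H → ℝ) (Φ' : H → H) (L s α : ℝ)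
    (hΨ_ne_bot : ∀ u, Ψ u ≠ ⊥) (hΨ_proper : ∃ u, Ψ u ≠ ⊤)
    (hΨ_lsc : LowerSemicontinuous Ψ)
    (hΨ_convex : ∀ u v : H, ∀ a b : ℝ, 0 ≤ a → 0 ≤ b → a + b = 1 →
      Ψ (a • u + b • v) ≤ (a : EReal) * Ψ u + (b : EReal) * Ψ v)
    (hΦ_convex : ConvexOn ℝ Set.univ Φ)
    (hΦ_diff : ∀ u, HasGradientAt Φ (Φ' u) u)
    (hΦ_lip : LipschitzWith (Real.toNNReal L) Φ')
    (hα : 3 ≤ α) (hs : 0 < s) (hsL : s < 1 / L)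
    (x y : ℕ → H)
    (hy : ∀ k : ℕ,
      y k = x k + (((k : ℝ) - 1) / ((k : ℝ) + α - 1)) • (x k - x (k - 1)))
    (hx : ∀ k : ℕ, ∀ u : H,
      Ψ (x (k + 1)) + ((1 / (2 * s) * ‖x (k + 1) - (y k - s • Φ' (y k))‖ ^ 2 : ℝ) : EReal)
        ≤ Ψ u + ((1 / (2 * s) * ‖u - (y k - s • Φ' (y k))‖ ^ 2 : ℝ) : EReal))
    (xstar : H)
    (hxstar : ∀ u, Ψ xstar + (Φ xstar : EReal) ≤ Ψ u + (Φ u : EReal)) :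
    ∀ k : ℕ,
      (((2 * s / (α - 1) * (((k + 1) : ℝ) + α - 2) ^ 2 : ℝ) : EReal) * ((Ψ (x (k + 1)) + (Φ (x (k + 1)) : EReal)) - (Ψ xstar + (Φ xstar : EReal))) + (((α - 1) * ‖(x (k + 1) + ((((k + 1) : ℝ) - 1) / (α - 1)) • (x (k + 1) - x ((k + 1) - 1))) - xstar‖ ^ 2 : ℝ) : EReal)) + ((2 * s * ((α - 3) / (α - 1)) * (k : ℝ) : ℝ) : EReal) * ((Ψ (x k) + (Φ (x k) : EReal)) - (Ψ xstar + (Φ xstar : EReal))) ≤ (((2 * s / (α - 1) * ((k : ℝ) + α - 2) ^ 2 : ℝ) : EReal) * ((Ψ (x k) + (Φ (x k) : EReal)) - (Ψ xstar + (Φ xstar : EReal))) + (((α - 1) * ‖(x k + (((k : ℝ) - 1) / (α - 1)) • (x k - x (k - 1))) - xstar‖ ^ 2 : ℝ) : EReal)) := by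
  have hsL' : s * L.toNNReal ≤ 1 := by
    have hL : 0 < L := one_div_pos.1 (hs.trans hsL)
    rw [Real.coe_toNNReal L hL.le]
    exact ((lt_div_iff₀ hL).1 hsL).le
  intro k
  simpa only [fistaEnergy, fistaAnchor, Nat.cast_add_one] using
    fista_energy_inequality_general hΨ_ne_bot hΨ_proper hΨ_convex hΦ_convex hΦ_diff hΦ_lip
      (by linarith) hs hsL' hy (fun k ↦ isMinOn_univ_iff.2 (hx k)) (isMinOn_univ_iff.2 hxstar) k
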